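/- In a finite MDP with n states, d0 is boundedly always synchronizing in T if and only if both M^{σ_u}_i(T) > 0 for all i ≥ 0 and M^{σ_u}_i(E ∩ T) > 0 for all i ≥ 2^n, where σ_u is the uniform strategy and E is the union of all end-components. -/

import Mathlib

open scoped BigOperators
open Classical Filter

/-- A finite Markov decision process with real transition probabilities. -/
structure MDP (Q A : Type) [Fintype Q] [Fintype A] where
  δ : Q → A → Q → ℝ
  δ_nonneg : ∀ q a q', 0 ≤ δ q a q'
  δ_sum : ∀ q a, ∑ q', δ q a q' = 1

namespace MDP

variable {Q A : Type} [Fintype Q] [Fintype A]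

/-- `d` is a probability distribution. -/
def IsDist (d : Q → ℝ) : Prop := (∀ q, 0 ≤ d q) ∧ ∑ q, d q = 1

/-- A (randomized, history-dependent) strategy maps a history (list of past
state-action pairs) and the current state to a distribution over actions. -/
def IsStrategy (σ : List (Q × A) → Q → A → ℝ) : Prop :=
  (∀ h q a, 0 ≤ σ h q a) ∧ ∀ h q, ∑ a, σ h q a = 1

/-- The probability of the finite path `qs` (with actions `as`) of length `i`,
under strategy `σ` from initial distribution `d0`. -/
noncomputable def pathProb (M : MDP Q A) (σ : List (Q × A) → Q → A → ℝ)
    (d0 : Q → ℝ) (i : ℕ) (qs : Fin (i + 1) → Q) (as : Fin i → A) : ℝ :=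
  d0 (qs 0) * ∏ j : Fin i,
    (σ (List.ofFn (fun k : Fin j.val =>
          (qs ⟨k.val, by have := k.isLt; have := j.isLt; omega⟩,
           as ⟨k.val, by have := k.isLt; have := j.isLt; omega⟩)))
        (qs j.castSucc) (as j))
      * M.δ (qs j.castSucc) (as j) (qs j.succ)

/-- The distribution over states after `i` steps (`M^σ_i`). -/
noncomputable def stepDist (M : MDP Q A) (σ : List (Q × A) → Q → A → ℝ)
    (d0 : Q → ℝ) (i : ℕ) (q : Q) : ℝ :=
  ∑ qs : Fin (i + 1) → Q, ∑ as : Fin i → A,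
    if qs (Fin.last i) = q then M.pathProb σ d0 i qs as else 0

/-- The probability mass that a (sub)distribution assigns to a set `T`. -/
noncomputable def mass (d : Q → ℝ) (T : Set Q) : ℝ := ∑ q, T.indicator d q

/-- The support of a (sub)distribution. -/
def supp {α : Type} (d : α → ℝ) : Set α := {q | 0 < d q}

/-- One-step sure predecessors of `Y`. -/
def Pre (M : MDP Q A) (Y : Set Q) : Set Q :=
  {q | ∃ a, ∀ q', 0 < M.δ q a q' → q' ∈ Y}

/-- Probability of reaching `T` within `i` steps. -/
noncomputable def reachProb (M : MDP Q A) (σ : List (Q × A) → Q → A → ℝ)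
    (d0 : Q → ℝ) (T : Set Q) (i : ℕ) : ℝ :=
  ∑ qs : Fin (i + 1) → Q, ∑ as : Fin i → A,
    if ∃ j, qs j ∈ T then M.pathProb σ d0 i qs as else 0

/-- `d0` is almost-sure winning for the reachability objective `◇T`:
some strategy reaches `T` with probability one. -/
def ASReach (M : MDP Q A) (d0 : Q → ℝ) (T : Set Q) : Prop :=
  ∃ σ, IsStrategy σ ∧ (⨆ i : ℕ, M.reachProb σ d0 T i) = 1

/-- `d0` is limit-sure eventually synchronizing in `T`. -/
def LimitSureEventually (M : MDP Q A) (d0 : Q → ℝ) (T : Set Q) : Prop :=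
  ∀ ε > (0 : ℝ), ∃ σ, IsStrategy σ ∧ ∃ i, 1 - ε ≤ mass (M.stepDist σ d0 i) T

/-- `d0` is almost-sure weakly synchronizing in `T`. -/
def ASWeakly (M : MDP Q A) (d0 : Q → ℝ) (T : Set Q) : Prop :=
  ∃ σ, IsStrategy σ ∧ ∀ ε > (0 : ℝ), {i : ℕ | 1 - ε ≤ mass (M.stepDist σ d0 i) T}.Infinite

/-- `d0` is almost-sure strongly synchronizing in `T`. -/
def ASStrongly (M : MDP Q A) (d0 : Q → ℝ) (T : Set Q) : Prop :=
  ∃ σ, IsStrategy σ ∧ ∀ ε > (0 : ℝ), ∃ N, ∀ i ≥ N, 1 - ε ≤ mass (M.stepDist σ d0 i) T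

/-- The uniform distribution on a set `S`. -/
noncomputable def uniformOn (S : Set Q) : Q → ℝ :=
  fun q => if q ∈ S then 1 / (S.ncard : ℝ) else 0

/-- The uniform strategy, playing all actions uniformly at random. -/
noncomputable def uniformStrategy (Q A : Type) [Fintype A] :
    List (Q × A) → Q → A → ℝ :=
  fun _ _ _ => 1 / (Fintype.card A : ℝ)

/-- Action `a` is allowed in `q` w.r.t. `S` if all its successors stay in `S`. -/
def Allowed (M : MDP Q A) (S : Set Q) (q : Q) (a : A) : Prop :=
  ∀ q', 0 < M.δ q a q' → q' ∈ S

/-- Edge relation within `S` given the allowed actions. -/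
def ECEdge (M : MDP Q A) (S : Set Q) (q q' : Q) : Prop :=
  q ∈ S ∧ q' ∈ S ∧ ∃ a, M.Allowed S q a ∧ 0 < M.δ q a q'

/-- `S` is an end-component: closed and strongly connected via allowed actions. -/
def IsEC (M : MDP Q A) (S : Set Q) : Prop :=
  (∀ q ∈ S, ∃ a, M.Allowed S q a) ∧
  ∀ q ∈ S, ∀ q' ∈ S, Relation.ReflTransGen (M.ECEdge S) q q'

/-- The union of all end-components. -/
def ECUnion (M : MDP Q A) : Set Q := ⋃₀ {S | M.IsEC S}

/-- Positive always synchronizing in `T`. -/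
def PosAlways (M : MDP Q A) (d0 : Q → ℝ) (T : Set Q) : Prop :=
  ∃ σ, IsStrategy σ ∧ ∀ i, 0 < mass (M.stepDist σ d0 i) T

/-- Positive eventually synchronizing in `T`. -/
def PosEvent (M : MDP Q A) (d0 : Q → ℝ) (T : Set Q) : Prop :=
  ∃ σ, IsStrategy σ ∧ ∃ i, 0 < mass (M.stepDist σ d0 i) T

/-- Positive weakly synchronizing in `T`. -/
def PosWeakly (M : MDP Q A) (d0 : Q → ℝ) (T : Set Q) : Prop :=
  ∃ σ, IsStrategy σ ∧ ∀ N, ∃ i ≥ N, 0 < mass (M.stepDist σ d0 i) T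

/-- Positive strongly synchronizing in `T`. -/
def PosStrongly (M : MDP Q A) (d0 : Q → ℝ) (T : Set Q) : Prop :=
  ∃ σ, IsStrategy σ ∧ ∃ N, ∀ i ≥ N, 0 < mass (M.stepDist σ d0 i) T

/-- Bounded always synchronizing in `T`. -/
def BndAlways (M : MDP Q A) (d0 : Q → ℝ) (T : Set Q) : Prop :=
  ∃ σ, IsStrategy σ ∧ ∃ ε > (0 : ℝ), ∀ i, ε < mass (M.stepDist σ d0 i) T

/-- Bounded eventually synchronizing in `T`. -/
def BndEvent (M : MDP Q A) (d0 : Q → ℝ) (T : Set Q) : Prop :=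
  ∃ σ, IsStrategy σ ∧ ∃ ε > (0 : ℝ), ∃ i, ε < mass (M.stepDist σ d0 i) T

/-- Bounded weakly synchronizing in `T`. -/
def BndWeakly (M : MDP Q A) (d0 : Q → ℝ) (T : Set Q) : Prop :=
  ∃ σ, IsStrategy σ ∧ ∃ ε > (0 : ℝ), ∀ N, ∃ i ≥ N, ε < mass (M.stepDist σ d0 i) T

/-- Bounded strongly synchronizing in `T`. -/
def BndStrongly (M : MDP Q A) (d0 : Q → ℝ) (T : Set Q) : Prop :=
  ∃ σ, IsStrategy σ ∧ ∃ ε > (0 : ℝ), ∃ N, ∀ i ≥ N, ε < mass (M.stepDist σ d0 i) T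

end MDP

namespace MDP

variable {Q A : Type} [Fintype Q] [Fintype A]

/-- A positive function on a finite set has a positive lower bound. -/
lemma exists_pos_lb {ι : Type} (s : Finset ι) (f : ι → ℝ) (hf : ∀ i ∈ s, 0 < f i) :
    ∃ c > (0 : ℝ), ∀ i ∈ s, c ≤ f i := by
  induction s using Finset.induction_on with
  | empty => exact ⟨1, one_pos, by simp⟩
  | insert a s ha ih =>
    obtain ⟨c, hc, h⟩ := ih (fun i hi => hf i (Finset.mem_insert_of_mem hi))
    refine ⟨min c (f a), lt_min hc (hf a (Finset.mem_insert_self _ _)), fun i hi => ?_⟩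
    rcases Finset.mem_insert.1 hi with rfl | hi
    · exact min_le_right _ _
    · exact (min_le_left _ _).trans (h i hi)

lemma exists_pos_of_sum_pos {ι : Type} [Fintype ι] {f : ι → ℝ} (h : 0 < ∑ i, f i) :
    ∃ i, 0 < f i := by
  by_contra hc
  push Not at hc
  exact absurd (Finset.sum_nonpos (fun i _ => hc i)) (not_le.2 h)

lemma sum_pos_of_exists {ι : Type} [Fintype ι] {f : ι → ℝ} (h0 : ∀ i, 0 ≤ f i) (i : ι)
    (h : 0 < f i) : 0 < ∑ i, f i :=
  h.trans_le (Finset.single_le_sum (f := f) (fun i _ => h0 i) (Finset.mem_univ i))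

/-! ### Path decomposition -/

/-- The history list of a path. -/
def hist (i : ℕ) (qs : Fin (i + 1) → Q) (as : Fin i → A) : List (Q × A) :=
  List.ofFn (fun k : Fin i => (qs k.castSucc, as k))

lemma pathProb_succ (M : MDP Q A) (σ : List (Q × A) → Q → A → ℝ) (d0 : Q → ℝ) (i : ℕ)
    (qs : Fin (i + 2) → Q) (as : Fin (i + 1) → A) :
    M.pathProb σ d0 (i + 1) qs as =
      M.pathProb σ d0 i (fun k => qs k.castSucc) (fun k => as k.castSucc) *
      (σ (hist i (fun k => qs k.castSucc) (fun k => as k.castSucc))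
        (qs (Fin.last i).castSucc) (as (Fin.last i)) *
        M.δ (qs (Fin.last i).castSucc) (as (Fin.last i)) (qs (Fin.last (i + 1)))) := by
  unfold pathProb
  rw [Fin.prod_univ_castSucc, ← mul_assoc]
  rfl

/-- Joint probability of state and action at step `i`. -/
noncomputable def joint (M : MDP Q A) (σ : List (Q × A) → Q → A → ℝ) (d0 : Q → ℝ) (i : ℕ)
    (q : Q) (a : A) : ℝ :=
  ∑ qs : Fin (i + 1) → Q, ∑ as : Fin i → A,
    if qs (Fin.last i) = q then M.pathProb σ d0 i qs as * σ (hist i qs as) q a else 0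

lemma pathProb_nonneg (M : MDP Q A) {σ : List (Q × A) → Q → A → ℝ} (hσ : IsStrategy σ)
    {d0 : Q → ℝ} (hd : IsDist d0) (i : ℕ) (qs : Fin (i + 1) → Q) (as : Fin i → A) :
    0 ≤ M.pathProb σ d0 i qs as :=
  mul_nonneg (hd.1 _) (Finset.prod_nonneg fun _ _ => mul_nonneg (hσ.1 _ _ _) (M.δ_nonneg _ _ _))

lemma joint_nonneg (M : MDP Q A) {σ : List (Q × A) → Q → A → ℝ} (hσ : IsStrategy σ)
    {d0 : Q → ℝ} (hd : IsDist d0) (i : ℕ) (q : Q) (a : A) : 0 ≤ M.joint σ d0 i q a := by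
  refine Finset.sum_nonneg fun qs _ => Finset.sum_nonneg fun as _ => ?_
  split_ifs
  · exact mul_nonneg (pathProb_nonneg M hσ hd _ _ _) (hσ.1 _ _ _)
  · exact le_rfl

lemma stepDist_nonneg (M : MDP Q A) {σ : List (Q × A) → Q → A → ℝ} (hσ : IsStrategy σ)
    {d0 : Q → ℝ} (hd : IsDist d0) (i : ℕ) (q : Q) : 0 ≤ M.stepDist σ d0 i q := by
  refine Finset.sum_nonneg fun qs _ => Finset.sum_nonneg fun as _ => ?_
  split_ifs
  · exact pathProb_nonneg M hσ hd _ _ _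
  · exact le_rfl

lemma joint_sum (M : MDP Q A) {σ : List (Q × A) → Q → A → ℝ} (hσ : IsStrategy σ)
    (d0 : Q → ℝ) (i : ℕ) (q : Q) : ∑ a, M.joint σ d0 i q a = M.stepDist σ d0 i q := by
  unfold joint stepDist
  rw [Finset.sum_comm]
  refine Finset.sum_congr rfl fun qs _ => ?_
  rw [Finset.sum_comm]
  refine Finset.sum_congr rfl fun as _ => ?_
  split_ifs
  · rw [← Finset.mul_sum, hσ.2, mul_one]
  · simp

lemma joint_markov (M : MDP Q A) (s : ℕ → Q → A → ℝ) (d0 : Q → ℝ) (i : ℕ) (q : Q) (a : A) :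
    M.joint (fun h => s h.length) d0 i q a =
      M.stepDist (fun h => s h.length) d0 i q * s i q a := by
  unfold joint stepDist
  rw [Finset.sum_mul]
  refine Finset.sum_congr rfl fun qs _ => ?_
  rw [Finset.sum_mul]
  refine Finset.sum_congr rfl fun as _ => ?_
  split_ifs
  · simp [hist]
  · simp

lemma stepDist_zero (M : MDP Q A) (σ : List (Q × A) → Q → A → ℝ) (d0 : Q → ℝ) (q : Q) :
    M.stepDist σ d0 0 q = d0 q := by
  unfold stepDist pathProb
  rw [← Equiv.sum_comp (Equiv.funUnique (Fin 1) Q).symm]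
  simp

lemma stepDist_succ (M : MDP Q A) (σ : List (Q × A) → Q → A → ℝ) (d0 : Q → ℝ) (i : ℕ) (q' : Q) :
    M.stepDist σ d0 (i + 1) q' = ∑ q, ∑ a, M.joint σ d0 i q a * M.δ q a q' := by
  unfold stepDist joint
  rw [← Equiv.sum_comp (Fin.snocEquiv (fun _ : Fin (i + 2) => Q))]
  rw [Fintype.sum_prod_type, Finset.sum_comm]
  simp_rw [← Equiv.sum_comp (Fin.snocEquiv (fun _ : Fin (i + 1) => A)), pathProb_succ,
    Fintype.sum_prod_type]
  simp only [Fin.snocEquiv_apply, Fin.snoc_castSucc, Fin.snoc_last]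
  simp_rw [Finset.sum_mul]
  have : ∀ (q : Q) (a : A), ∑ qs : Fin (i + 1) → Q, ∑ as : Fin i → A,
      (if qs (Fin.last i) = q then M.pathProb σ d0 i qs as * σ (hist i qs as) q a else 0)
        * M.δ q a q' = ∑ qs : Fin (i + 1) → Q, ∑ as : Fin i → A,
      (if qs (Fin.last i) = q then M.pathProb σ d0 i qs as *
        (σ (hist i qs as) (qs (Fin.last i)) a * M.δ (qs (Fin.last i)) a q') else 0) := by
    intro q a
    refine Finset.sum_congr rfl fun qs _ => Finset.sum_congr rfl fun as _ => ?_
    split_ifs with h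
    · rw [h, mul_assoc]
    · simp
  simp_rw [this]
  have h2 : ∀ q : Q, ∑ a : A, ∑ qs : Fin (i + 1) → Q, ∑ as : Fin i → A,
      (if qs (Fin.last i) = q then M.pathProb σ d0 i qs as *
        (σ (hist i qs as) (qs (Fin.last i)) a * M.δ (qs (Fin.last i)) a q') else 0)
      = ∑ qs : Fin (i + 1) → Q, if qs (Fin.last i) = q then
        ∑ a : A, ∑ as : Fin i → A, M.pathProb σ d0 i qs as *
        (σ (hist i qs as) (qs (Fin.last i)) a * M.δ (qs (Fin.last i)) a q') else 0 := by
    intro q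
    rw [Finset.sum_comm]
    refine Finset.sum_congr rfl fun qs _ => ?_
    split_ifs <;> simp
  simp_rw [h2]
  rw [Finset.sum_comm (s := (Finset.univ : Finset Q))]
  refine Finset.sum_congr rfl fun qs _ => ?_
  rw [Finset.sum_ite_eq]
  simp only [Finset.mem_univ, if_true]
  rw [Finset.sum_comm]
  refine Finset.sum_congr rfl fun x _ => ?_
  rw [Finset.sum_comm]
  refine Finset.sum_congr rfl fun y _ => ?_
  rw [Finset.sum_ite_eq']
  simp

lemma stepDist_sum (M : MDP Q A) {σ : List (Q × A) → Q → A → ℝ} (hσ : IsStrategy σ)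
    {d0 : Q → ℝ} (hd : IsDist d0) (i : ℕ) : ∑ q, M.stepDist σ d0 i q = 1 := by
  induction i with
  | zero => simp_rw [stepDist_zero]; exact hd.2
  | succ i ih =>
    simp_rw [stepDist_succ]
    rw [Finset.sum_comm]
    rw [← ih]
    refine Finset.sum_congr rfl fun q _ => ?_
    rw [Finset.sum_comm, ← joint_sum M hσ]
    refine Finset.sum_congr rfl fun a _ => ?_
    rw [← Finset.mul_sum, M.δ_sum, mul_one]

lemma joint_le (M : MDP Q A) {σ : List (Q × A) → Q → A → ℝ} (hσ : IsStrategy σ)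
    {d0 : Q → ℝ} (hd : IsDist d0) (i : ℕ) (q : Q) (a : A) :
    M.joint σ d0 i q a ≤ M.stepDist σ d0 i q := by
  rw [← joint_sum M hσ]
  exact Finset.single_le_sum (f := fun a => M.joint σ d0 i q a)
    (fun a _ => joint_nonneg M hσ hd i q a) (Finset.mem_univ a)

lemma stepDist_le_one (M : MDP Q A) {σ : List (Q × A) → Q → A → ℝ} (hσ : IsStrategy σ)
    {d0 : Q → ℝ} (hd : IsDist d0) (i : ℕ) (q : Q) : M.stepDist σ d0 i q ≤ 1 := by
  rw [← stepDist_sum M hσ hd i]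
  exact Finset.single_le_sum (f := fun q => M.stepDist σ d0 i q)
    (fun a _ => stepDist_nonneg M hσ hd i a) (Finset.mem_univ q)

/-! ### The uniform strategy -/

lemma uniform_isStrategy [Nonempty A] : IsStrategy (uniformStrategy Q A) := by
  refine ⟨fun h q a => by unfold uniformStrategy; positivity, fun h q => ?_⟩
  simp [uniformStrategy]

lemma uniform_joint (M : MDP Q A) (d0 : Q → ℝ) (i : ℕ) (q : Q) (a : A) :
    M.joint (uniformStrategy Q A) d0 i q a =
      M.stepDist (uniformStrategy Q A) d0 i q * (1 / (Fintype.card A : ℝ)) :=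
  joint_markov M (fun _ _ _ => 1 / (Fintype.card A : ℝ)) d0 i q a

lemma uniform_succ_pos [Nonempty A] (M : MDP Q A) {d0 : Q → ℝ} (hd : IsDist d0) (i : ℕ) (q' : Q) :
    0 < M.stepDist (uniformStrategy Q A) d0 (i + 1) q' ↔
      ∃ q, 0 < M.stepDist (uniformStrategy Q A) d0 i q ∧ ∃ a, 0 < M.δ q a q' := by
  have hA : (0 : ℝ) < 1 / (Fintype.card A : ℝ) := by positivity
  have hn := stepDist_nonneg M (uniform_isStrategy (Q := Q) (A := A)) hd i
  simp only [stepDist_succ, uniform_joint]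
  constructor
  · intro h
    obtain ⟨q, h⟩ := exists_pos_of_sum_pos h
    obtain ⟨a, h⟩ := exists_pos_of_sum_pos h
    refine ⟨q, (hn q).lt_of_ne ?_, a, (M.δ_nonneg q a q').lt_of_ne ?_⟩
    · intro h0; rw [← h0] at h; simp at h
    · intro h0; rw [← h0] at h; simp at h
  · rintro ⟨q, hq, a, ha⟩
    have key : ∀ q a, 0 ≤ M.stepDist (uniformStrategy Q A) d0 i q * (1 / (Fintype.card A : ℝ)) *
        M.δ q a q' := fun q a => mul_nonneg (mul_nonneg (hn q) hA.le) (M.δ_nonneg _ _ _)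
    refine sum_pos_of_exists (fun q => Finset.sum_nonneg fun a _ => key q a) q ?_
    exact sum_pos_of_exists (key q) a (mul_pos (mul_pos hq hA) ha)

lemma uniform_pos_of_pos [Nonempty A] (M : MDP Q A) {σ : List (Q × A) → Q → A → ℝ}
    (hσ : IsStrategy σ) {d0 : Q → ℝ} (hd : IsDist d0) (i : ℕ) :
    ∀ q, 0 < M.stepDist σ d0 i q → 0 < M.stepDist (uniformStrategy Q A) d0 i q := by
  induction i with
  | zero => intro q h; rw [stepDist_zero] at *; exact h
  | succ i ih =>
    intro q' h
    rw [stepDist_succ] at h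
    obtain ⟨q, h⟩ := exists_pos_of_sum_pos h
    obtain ⟨a, h⟩ := exists_pos_of_sum_pos h
    rw [uniform_succ_pos M hd]
    have h1 := joint_nonneg M hσ hd i q a
    refine ⟨q, ih q ?_, a, (M.δ_nonneg q a q').lt_of_ne ?_⟩
    · refine (h1.lt_of_ne ?_).trans_le (joint_le M hσ hd i q a)
      intro h0; rw [← h0] at h; simp at h
    · intro h0; rw [← h0] at h; simp at h

lemma mass_pos_iff {d : Q → ℝ} (hd : ∀ q, 0 ≤ d q) (T : Set Q) :
    0 < mass d T ↔ ∃ q ∈ T, 0 < d q := by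
  unfold mass
  constructor
  · intro h
    obtain ⟨q, h⟩ := exists_pos_of_sum_pos h
    by_cases hq : q ∈ T
    · exact ⟨q, hq, by simpa [hq] using h⟩
    · simp [hq] at h
  · rintro ⟨q, hq, h⟩
    exact sum_pos_of_exists (fun q => Set.indicator_nonneg (fun q _ => hd q) q) q (by simpa [hq])

lemma le_mass {d : Q → ℝ} (hd : ∀ q, 0 ≤ d q) {T : Set Q} {q : Q} (hq : q ∈ T) :
    d q ≤ mass d T := by
  unfold mass
  have := Finset.single_le_sum (f := fun q => T.indicator d q)
    (fun q _ => Set.indicator_nonneg (fun q _ => hd q) q) (Finset.mem_univ q)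
  simpa [hq] using this

/-- Periodicity of the supports under the uniform strategy. -/
lemma uniform_periodic [Nonempty A] (M : MDP Q A) {d0 : Q → ℝ} (hd : IsDist d0) :
    ∃ p ≥ 1, ∀ i ≥ 2 ^ Fintype.card Q, ∀ m : ℕ,
      supp (M.stepDist (uniformStrategy Q A) d0 (i + m * p)) =
        supp (M.stepDist (uniformStrategy Q A) d0 i) := by
  set S : ℕ → Set Q := fun i => supp (M.stepDist (uniformStrategy Q A) d0 i) with hS
  have hstep : ∀ i j, S i = S j → S (i + 1) = S (j + 1) := by
    intro i j h
    ext q'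
    simp only [hS, supp, Set.mem_setOf_eq, uniform_succ_pos M hd]
    have h' : ∀ q, 0 < M.stepDist (uniformStrategy Q A) d0 i q ↔
        0 < M.stepDist (uniformStrategy Q A) d0 j q := fun q => Set.ext_iff.1 h q
    simp only [h']
  obtain ⟨x, y, hxy, hf⟩ := Fintype.exists_ne_map_eq_of_card_lt
    (fun k : Fin (2 ^ Fintype.card Q + 1) => S k) (by simp)
  have main : ∀ x y : ℕ, x < y → y ≤ 2 ^ Fintype.card Q → S x = S y →
      ∃ p ≥ 1, ∀ i ≥ 2 ^ Fintype.card Q, ∀ m : ℕ, S (i + m * p) = S i := by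
    intro x y hlt hy hxy
    have h1 : ∀ k, S (x + k) = S (y + k) := by
      intro k
      induction k with
      | zero => exact hxy
      | succ k ih => exact hstep _ _ ih
    refine ⟨y - x, by omega, fun i hi m => ?_⟩
    induction m with
    | zero => simp
    | succ m ih =>
      rw [← ih]
      have := h1 (i + m * (y - x) - x)
      rw [show x + (i + m * (y - x) - x) = i + m * (y - x) by omega] at this
      rw [this]
      congr 1
      rw [Nat.succ_mul]
      omega
  rcases lt_or_gt_of_ne hxy with h | h
  · exact main x y h (by omega) hf
  · exact main y x h (by omega) hf.symm

/-! ### Occupation measures are carried by end-components -/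

lemma flow_subset (M : MDP Q A) (x : Q → A → ℝ) (hx : ∀ q a, 0 ≤ x q a)
    (hflow : ∀ q', ∑ a, x q' a = ∑ q, ∑ a, x q a * M.δ q a q') (q0 : Q)
    (h0 : 0 < ∑ a, x q0 a) : q0 ∈ M.ECUnion := by
  set R : Q → Q → Prop := fun q q' => ∃ a, 0 < x q a ∧ 0 < M.δ q a q' with hR
  have hclosed : ∀ S : Set Q, (∀ q ∈ S, ∀ q', R q q' → q' ∈ S) →
      ∀ q q', R q q' → q' ∈ S → q ∈ S := by
    intro S hS q q' hqq' hq'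
    by_contra hq
    have e1 : ∑ z, (if z ∈ S then ∑ a, x z a else 0) =
        ∑ y, ∑ a, x y a * ∑ z, (if z ∈ S then M.δ y a z else 0) := by
      calc _ = ∑ z, ∑ y, ∑ a, x y a * (if z ∈ S then M.δ y a z else 0) := by
            refine Finset.sum_congr rfl fun z _ => ?_
            split_ifs
            · exact hflow z
            · simp
        _ = _ := by
            rw [Finset.sum_comm]
            refine Finset.sum_congr rfl fun y _ => ?_
            rw [Finset.sum_comm]
            refine Finset.sum_congr rfl fun a _ => ?_
            rw [Finset.mul_sum]
    have hnn : ∀ y a, 0 ≤ x y a * ∑ z, (if z ∈ S then M.δ y a z else 0) := by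
      intro y a
      refine mul_nonneg (hx y a) (Finset.sum_nonneg fun z _ => ?_)
      split_ifs
      exacts [M.δ_nonneg _ _ _, le_rfl]
    have e2 : ∑ z, (if z ∈ S then ∑ a, x z a else 0) <
        ∑ y, ∑ a, x y a * ∑ z, (if z ∈ S then M.δ y a z else 0) := by
      refine Finset.sum_lt_sum (fun y _ => ?_) ⟨q, Finset.mem_univ _, ?_⟩
      · split_ifs with hy
        · refine Finset.sum_le_sum fun a _ => ?_
          rcases (hx y a).eq_or_lt with h | h
          · rw [← h]; simp
          · have : ∑ z, (if z ∈ S then M.δ y a z else 0) = 1 := by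
              rw [← M.δ_sum y a]
              refine Finset.sum_congr rfl fun z _ => ?_
              split_ifs with hz
              · rfl
              · by_contra hne
                exact hz (hS y hy z ⟨a, h, (M.δ_nonneg _ _ _).lt_of_ne hne⟩)
            rw [this, mul_one]
        · exact Finset.sum_nonneg fun a _ => hnn y a
      · rw [if_neg hq]
        obtain ⟨a, ha, hd⟩ := hqq'
        refine sum_pos_of_exists (hnn q) a (mul_pos ha ?_)
        refine sum_pos_of_exists (fun z => ?_) q' (by simpa [hq'] using hd)
        split_ifs
        exacts [M.δ_nonneg _ _ _, le_rfl]
    exact absurd e1 e2.ne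
  have hback : ∀ q q', R q q' → Relation.ReflTransGen R q' q := by
    intro q q' h
    exact hclosed {z | Relation.ReflTransGen R q' z} (fun y hy z hz => hy.tail hz) q q' h
      Relation.ReflTransGen.refl
  have hsymm : ∀ q q', Relation.ReflTransGen R q q' → Relation.ReflTransGen R q' q := by
    intro q q' h
    induction h with
    | refl => exact .refl
    | tail _ h2 ih => exact (hback _ _ h2).trans ih
  set S : Set Q := {z | Relation.ReflTransGen R q0 z} with hSdef
  have hpos : ∀ q ∈ S, ∃ a, 0 < x q a := by
    intro q hq
    rcases Relation.ReflTransGen.cases_tail hq with h | ⟨y, _, a, ha, hd⟩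
    · rw [h]; exact exists_pos_of_sum_pos h0
    · apply exists_pos_of_sum_pos
      rw [hflow q]
      have key : ∀ y a, 0 ≤ x y a * M.δ y a q := fun y a => mul_nonneg (hx _ _) (M.δ_nonneg _ _ _)
      exact sum_pos_of_exists (fun y => Finset.sum_nonneg fun a _ => key y a) y
        (sum_pos_of_exists (key y) a (mul_pos ha hd))
  have hall : ∀ q ∈ S, ∀ a, 0 < x q a → M.Allowed S q a := fun q hq a ha q' hd =>
    Relation.ReflTransGen.tail hq ⟨a, ha, hd⟩
  refine Set.mem_sUnion.2 ⟨S, ⟨fun q hq => ?_, fun q hq q' hq' => ?_⟩, Relation.ReflTransGen.refl⟩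
  · obtain ⟨a, ha⟩ := hpos q hq
    exact ⟨a, hall q hq a ha⟩
  · have hp : Relation.ReflTransGen R q q' := (hsymm _ _ hq).trans hq'
    clear hq'
    induction hp with
    | refl => exact .refl
    | @tail b c h1 h2 ih =>
      refine ih.tail ⟨Relation.ReflTransGen.trans hq h1, ?_, ?_⟩
      · exact Relation.ReflTransGen.tail (Relation.ReflTransGen.trans hq h1) h2
      · obtain ⟨a, ha, hd⟩ := h2
        exact ⟨a, hall b (Relation.ReflTransGen.trans hq h1) a ha, hd⟩

/-- The mass outside the end-components cannot be bounded below along an arithmetic progression. -/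
lemma not_bounded_outside (M : MDP Q A) {σ : List (Q × A) → Q → A → ℝ} (hσ : IsStrategy σ)
    {d0 : Q → ℝ} (hd : IsDist d0) (ε : ℝ) (hε : 0 < ε) (i p : ℕ) (hp : 1 ≤ p)
    (h : ∀ m, ε ≤ mass (M.stepDist σ d0 (i + m * p)) (M.ECUnion)ᶜ) : False := by
  set J := M.joint σ d0 with hJ
  set D := M.stepDist σ d0 with hD
  have Jn : ∀ k q a, 0 ≤ J k q a := fun k q a => joint_nonneg M hσ hd k q a
  have Jle : ∀ k q a, J k q a ≤ 1 := fun k q a =>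
    (joint_le M hσ hd k q a).trans (stepDist_le_one M hσ hd k q)
  set N : ℕ → ℕ := fun n => i + (n + 1) * p with hN
  set X : ℕ → Q → A → ℝ := fun n q a => (∑ k ∈ Finset.range (N n), J k q a) / (N n : ℝ) with hX
  have Npos : ∀ n, (0 : ℝ) < N n := by
    intro n
    have : 0 < N n := by simp only [hN]; positivity
    exact_mod_cast this
  have Nge : ∀ n : ℕ, (n : ℝ) ≤ N n := by
    intro n
    have : n ≤ N n := by simp only [hN]; nlinarith
    exact_mod_cast this
  have Xn : ∀ n q a, 0 ≤ X n q a := fun n q a =>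
    div_nonneg (Finset.sum_nonneg fun k _ => Jn k q a) (Npos n).le
  have Xle : ∀ n q a, X n q a ≤ 1 := by
    intro n q a
    rw [div_le_one (Npos n)]
    calc _ ≤ ∑ k ∈ Finset.range (N n), (1 : ℝ) := Finset.sum_le_sum fun k _ => Jle k q a
      _ = _ := by simp
  have hcomp : IsCompact (Set.pi Set.univ fun _ : Q => Set.pi Set.univ fun _ : A =>
      Set.Icc (0 : ℝ) 1) := isCompact_univ_pi fun _ => isCompact_univ_pi fun _ => isCompact_Icc
  obtain ⟨x, hx, φ, hφ, hlim⟩ := hcomp.tendsto_subseq (x := X)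
    (fun n => fun q _ a _ => ⟨Xn n q a, Xle n q a⟩)
  have hlim' : ∀ q a, Tendsto (fun n => X (φ n) q a) atTop (nhds (x q a)) := by
    intro q a
    exact tendsto_pi_nhds.1 (tendsto_pi_nhds.1 hlim q) a
  have hx0 : ∀ q a, 0 ≤ x q a := fun q a => (hx q trivial a trivial).1
  have hXD : ∀ n q, ∑ a, X n q a = (∑ k ∈ Finset.range (N n), D k q) / (N n : ℝ) := by
    intro n q
    simp only [hX]
    rw [← Finset.sum_div, Finset.sum_comm]
    congr 1
    exact Finset.sum_congr rfl fun k _ => joint_sum M hσ d0 k q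
  have hXδ : ∀ n q', ∑ q, ∑ a, X n q a * M.δ q a q' =
      (∑ k ∈ Finset.range (N n), D (k + 1) q') / (N n : ℝ) := by
    intro n q'
    simp only [hX, hD, stepDist_succ, ← hJ]
    rw [Finset.sum_comm (s := Finset.range (N n)), Finset.sum_div]
    refine Finset.sum_congr rfl fun q _ => ?_
    rw [Finset.sum_comm (s := Finset.range (N n)), Finset.sum_div]
    refine Finset.sum_congr rfl fun a _ => ?_
    rw [div_mul_eq_mul_div, Finset.sum_mul]
  have hdiff : ∀ n q', |∑ a, X n q' a - ∑ q, ∑ a, X n q a * M.δ q a q'| ≤ 1 / (N n : ℝ) := by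
    intro n q'
    rw [hXD, hXδ, ← sub_div, abs_div, abs_of_pos (Npos n)]
    refine div_le_div_of_nonneg_right ?_ (Npos n).le
    rw [← Finset.sum_sub_distrib, Finset.sum_range_sub']
    have a1 := stepDist_nonneg M hσ hd 0 q'
    have a2 := stepDist_nonneg M hσ hd (N n) q'
    have a3 := stepDist_le_one M hσ hd 0 q'
    have a4 := stepDist_le_one M hσ hd (N n) q'
    rw [abs_le]
    constructor <;> simp only [hD] <;> linarith
  have hNlim : Tendsto (fun n => 1 / (N (φ n) : ℝ)) atTop (nhds 0) := by
    have h1 : Tendsto (fun n => (N (φ n) : ℝ)) atTop atTop := by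
      refine tendsto_atTop_mono (fun n => ?_) (tendsto_natCast_atTop_atTop (R := ℝ))
      have : (n : ℝ) ≤ φ n := by exact_mod_cast hφ.id_le n
      exact this.trans (Nge _)
    simp only [one_div]
    exact h1.inv_tendsto_atTop
  have hflow : ∀ q', ∑ a, x q' a = ∑ q, ∑ a, x q a * M.δ q a q' := by
    intro q'
    have l1 : Tendsto (fun n => |∑ a, X (φ n) q' a - ∑ q, ∑ a, X (φ n) q a * M.δ q a q'|) atTop
        (nhds |∑ a, x q' a - ∑ q, ∑ a, x q a * M.δ q a q'|) := by
      refine Tendsto.abs (Tendsto.sub (tendsto_finsetSum _ fun a _ => hlim' q' a) ?_)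
      exact tendsto_finsetSum _ fun q _ => tendsto_finsetSum _ fun a _ =>
        (hlim' q a).mul_const _
    have := le_of_tendsto_of_tendsto' l1 hNlim (fun n => hdiff (φ n) q')
    exact sub_eq_zero.1 (abs_eq_zero.1 (le_antisymm this (abs_nonneg _)))
  have hout : ∀ q, q ∉ M.ECUnion → ∑ a, x q a = 0 := by
    intro q hq
    by_contra hne
    exact hq (flow_subset M x hx0 hflow q
      ((Finset.sum_nonneg fun a _ => hx0 q a).lt_of_ne (Ne.symm hne)))
  have Dn : ∀ k, 0 ≤ mass (D k) (M.ECUnion)ᶜ := fun k =>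
    Finset.sum_nonneg fun q _ => Set.indicator_nonneg (fun q _ => stepDist_nonneg M hσ hd k q) q
  have hlow : ∀ n, ε / (i + p) ≤ mass (fun q => ∑ a, X n q a) (M.ECUnion)ᶜ := by
    intro n
    have e : mass (fun q => ∑ a, X n q a) (M.ECUnion)ᶜ =
        (∑ k ∈ Finset.range (N n), mass (D k) (M.ECUnion)ᶜ) / (N n : ℝ) := by
      unfold mass
      rw [Finset.sum_comm, Finset.sum_div]
      refine Finset.sum_congr rfl fun q _ => ?_
      by_cases hq : q ∈ (M.ECUnion)ᶜ
      · simp only [Set.indicator_of_mem hq]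
        exact hXD n q
      · simp [Set.indicator_of_notMem hq]
    rw [e]
    have hsum : ((n : ℝ) + 1) * ε ≤ ∑ k ∈ Finset.range (N n), mass (D k) (M.ECUnion)ᶜ := by
      have hinj : Function.Injective (fun m : ℕ => i + m * p) := by
        intro a b hab
        have : a * p = b * p := by simpa using hab
        exact Nat.eq_of_mul_eq_mul_right hp this
      have hsub : (Finset.range (n + 1)).map ⟨_, hinj⟩ ⊆ Finset.range (N n) := by
        intro k hk
        simp only [Finset.mem_map, Finset.mem_range, Function.Embedding.coeFn_mk] at hk ⊢
        obtain ⟨m, hm, rfl⟩ := hk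
        have := Nat.mul_lt_mul_of_pos_right hm hp
        simp only [hN]; omega
      calc ((n : ℝ) + 1) * ε = ∑ m ∈ Finset.range (n + 1), ε := by simp
        _ ≤ ∑ m ∈ Finset.range (n + 1), mass (D (i + m * p)) (M.ECUnion)ᶜ :=
            Finset.sum_le_sum fun m _ => h m
        _ = ∑ k ∈ (Finset.range (n + 1)).map ⟨_, hinj⟩, mass (D k) (M.ECUnion)ᶜ := by
            rw [Finset.sum_map]; rfl
        _ ≤ _ := Finset.sum_le_sum_of_subset_of_nonneg hsub fun k _ _ => Dn k
    have hp' : (0 : ℝ) < p := by exact_mod_cast hp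
    rw [div_le_div_iff₀ (by positivity) (Npos n)]
    have hNle : (N n : ℝ) ≤ (n + 1) * (i + p) := by
      simp only [hN]; push_cast
      have : (0 : ℝ) ≤ n * i := by positivity
      nlinarith
    calc ε * (N n : ℝ) ≤ ε * ((n + 1) * (i + p)) := mul_le_mul_of_nonneg_left hNle hε.le
      _ = ((n + 1) * ε) * (i + p) := by ring
      _ ≤ _ := mul_le_mul_of_nonneg_right hsum (by positivity)
  have hlim2 : Tendsto (fun n => mass (fun q => ∑ a, X (φ n) q a) (M.ECUnion)ᶜ) atTop
      (nhds (mass (fun q => ∑ a, x q a) (M.ECUnion)ᶜ)) := by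
    unfold mass
    refine tendsto_finsetSum _ fun q _ => ?_
    by_cases hq : q ∈ (M.ECUnion)ᶜ
    · simp only [Set.indicator_of_mem hq]
      exact tendsto_finsetSum _ fun a _ => hlim' q a
    · simp only [Set.indicator_of_notMem hq]
      exact tendsto_const_nhds
  have hfin : ε / (i + p) ≤ mass (fun q => ∑ a, x q a) (M.ECUnion)ᶜ :=
    ge_of_tendsto' hlim2 fun n => hlow (φ n)
  have hz : mass (fun q => ∑ a, x q a) (M.ECUnion)ᶜ = 0 := by
    unfold mass
    refine Finset.sum_eq_zero fun q _ => ?_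
    by_cases hq : q ∈ M.ECUnion
    · simp [hq]
    · simp [hq, hout q hq]
  have hp' : (0 : ℝ) < p := by exact_mod_cast hp
  have : 0 < ε / (i + p) := by positivity
  linarith

/-! ### Returning to recurrent states -/

lemma pow_stoch (K : Matrix Q Q ℝ) (hK : ∀ x y, 0 ≤ K x y) (hs : ∀ x, ∑ y, K x y = 1) (m : ℕ) :
    (∀ x y, 0 ≤ (K ^ m) x y) ∧ ∀ x, ∑ y, (K ^ m) x y = 1 := by
  induction m with
  | zero =>
    refine ⟨fun x y => ?_, fun x => ?_⟩
    · rw [pow_zero, Matrix.one_apply]; split_ifs <;> norm_num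
    · simp [Matrix.one_apply]
  | succ m ih =>
    refine ⟨fun x y => ?_, fun x => ?_⟩
    · rw [pow_succ, Matrix.mul_apply]
      exact Finset.sum_nonneg fun z _ => mul_nonneg (ih.1 _ _) (hK _ _)
    · simp_rw [pow_succ, Matrix.mul_apply]
      rw [Finset.sum_comm]
      simp_rw [← Finset.mul_sum, hs, mul_one]
      exact ih.2 x

lemma pow_add_pos (K : Matrix Q Q ℝ) (hK : ∀ x y, 0 ≤ K x y) (hs : ∀ x, ∑ y, K x y = 1)
    {a b : ℕ} {x y z : Q} (h1 : 0 < (K ^ a) x y) (h2 : 0 < (K ^ b) y z) :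
    0 < (K ^ (a + b)) x z := by
  rw [pow_add, Matrix.mul_apply]
  exact sum_pos_of_exists
    (fun w => mul_nonneg ((pow_stoch K hK hs a).1 _ _) ((pow_stoch K hK hs b).1 _ _)) y
    (mul_pos h1 h2)

lemma pow_mul_pos (K : Matrix Q Q ℝ) (hK : ∀ x y, 0 ≤ K x y) (hs : ∀ x, ∑ y, K x y = 1)
    {t : ℕ} {q : Q} (h : 0 < (K ^ t) q q) (n : ℕ) : 0 < (K ^ (n * t)) q q := by
  induction n with
  | zero => simp
  | succ n ih => rw [Nat.succ_mul]; exact pow_add_pos K hK hs ih h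

lemma return_bound (K : Matrix Q Q ℝ) (hK : ∀ x y, 0 ≤ K x y) (hs : ∀ x, ∑ y, K x y = 1) (q : Q)
    (hret : ∀ m x, 0 < (K ^ m) q x → ∃ s, 0 < (K ^ s) x q) :
    ∃ R ≥ 1, ∃ c > (0 : ℝ), ∀ m : ℕ, c ≤ (K ^ (m * R)) q q := by
  obtain ⟨R, hR1, hR⟩ : ∃ R ≥ 1, 0 < (K ^ R) q q := by
    obtain ⟨x, hx⟩ := exists_pos_of_sum_pos (f := fun y => K q y) (by rw [hs]; exact one_pos)
    have hx1 : 0 < (K ^ 1) q x := by simpa using hx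
    obtain ⟨s, hs'⟩ := hret 1 x hx1
    exact ⟨1 + s, by omega, pow_add_pos K hK hs hx1 hs'⟩
  have hst : ∀ x, (∃ m, 0 < (K ^ (m * R)) q x) → ∃ s, 0 < (K ^ (s * R)) x q := by
    rintro x ⟨m, hm⟩
    obtain ⟨s, hs'⟩ := hret _ x hm
    have ht := pow_add_pos K hK hs hm hs'
    have := pow_add_pos K hK hs hs' (pow_mul_pos K hK hs ht (R - 1))
    refine ⟨s + (R - 1) * m, ?_⟩
    convert this using 2
    obtain ⟨r, rfl⟩ : ∃ r, R = r + 1 := ⟨R - 1, by omega⟩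
    simp only [Nat.add_sub_cancel]
    ring_nf
  have hst' : ∀ x, ∃ s, (∃ m, 0 < (K ^ (m * R)) q x) → 0 < (K ^ (s * R)) x q := by
    intro x
    by_cases h : ∃ m, 0 < (K ^ (m * R)) q x
    · obtain ⟨s, h'⟩ := hst x h; exact ⟨s, fun _ => h'⟩
    · exact ⟨0, fun h' => absurd h' h⟩
  choose s hs' using hst'
  set L := ∑ x, s x with hL
  have hLpos : ∀ x, (∃ m, 0 < (K ^ (m * R)) q x) → 0 < (K ^ (L * R)) x q := by
    intro x hx
    have hle : s x ≤ L := Finset.single_le_sum (f := s) (fun _ _ => Nat.zero_le _) (Finset.mem_univ x)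
    have := pow_add_pos K hK hs (hs' x hx) (pow_mul_pos K hK hs hR (L - s x))
    rwa [← Nat.add_mul, Nat.add_sub_cancel' hle] at this
  obtain ⟨c, hc, hcl⟩ := exists_pos_lb
    (Finset.univ.filter fun x => ∃ m, 0 < (K ^ (m * R)) q x) (fun x => (K ^ (L * R)) x q)
    (fun x hx => hLpos x (Finset.mem_filter.1 hx).2)
  obtain ⟨c', hc', hcl'⟩ := exists_pos_lb (Finset.range L) (fun m => (K ^ (m * R)) q q)
    (fun m _ => pow_mul_pos K hK hs hR m)
  refine ⟨R, hR1, min c c', lt_min hc hc', fun m => ?_⟩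
  by_cases hm : m < L
  · exact (min_le_right _ _).trans (hcl' m (Finset.mem_range.2 hm))
  · refine (min_le_left _ _).trans ?_
    obtain ⟨k, rfl⟩ : ∃ k, m = k + L := ⟨m - L, by omega⟩
    rw [Nat.add_mul, pow_add, Matrix.mul_apply]
    have hk := pow_stoch K hK hs (k * R)
    calc c = ∑ x, (K ^ (k * R)) q x * c := by rw [← Finset.sum_mul, hk.2, one_mul]
      _ ≤ _ := by
        refine Finset.sum_le_sum fun x _ => ?_
        rcases (hk.1 q x).eq_or_lt with h | h
        · rw [← h]; simp
        · exact mul_le_mul_of_nonneg_left (hcl x (by simp; exact ⟨k, h⟩)) h.le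

/-! ### The strategy staying in end-components -/

/-- Actions that stay in some end-component. -/
def Good (M : MDP Q A) (q : Q) (a : A) : Prop :=
  ∃ S, M.IsEC S ∧ q ∈ S ∧ M.Allowed S q a

/-- Unnormalized weights. -/
noncomputable def wt (M : MDP Q A) (q : Q) (a : A) : ℝ :=
  if q ∈ M.ECUnion → M.Good q a then 1 else 0

/-- Uniform among good actions. -/
noncomputable def gs (M : MDP Q A) (q : Q) (a : A) : ℝ := M.wt q a / ∑ b, M.wt q b

lemma wt_nonneg (M : MDP Q A) (q : Q) (a : A) : 0 ≤ M.wt q a := by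
  unfold wt; split_ifs <;> norm_num

lemma wt_sum_pos [Nonempty A] (M : MDP Q A) (q : Q) : 0 < ∑ b, M.wt q b := by
  have : ∃ a, q ∈ M.ECUnion → M.Good q a := by
    by_cases hq : q ∈ M.ECUnion
    · obtain ⟨S, hS, hqS⟩ := Set.mem_sUnion.1 hq
      obtain ⟨a, ha⟩ := hS.1 q hqS
      exact ⟨a, fun _ => ⟨S, hS, hqS, ha⟩⟩
    · exact ⟨Classical.arbitrary A, fun h => absurd h hq⟩
  obtain ⟨a, ha⟩ := this
  exact sum_pos_of_exists (M.wt_nonneg q) a (by unfold wt; rw [if_pos ha]; exact one_pos)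

lemma gs_nonneg (M : MDP Q A) (q : Q) (a : A) : 0 ≤ M.gs q a :=
  div_nonneg (M.wt_nonneg q a) (Finset.sum_nonneg fun _ _ => M.wt_nonneg _ _)

lemma gs_sum [Nonempty A] (M : MDP Q A) (q : Q) : ∑ a, M.gs q a = 1 := by
  unfold gs
  rw [← Finset.sum_div, div_self (M.wt_sum_pos q).ne']

lemma gs_le_one [Nonempty A] (M : MDP Q A) (q : Q) (a : A) : M.gs q a ≤ 1 := by
  rw [← M.gs_sum q]
  exact Finset.single_le_sum (f := fun a => M.gs q a) (fun a _ => M.gs_nonneg q a)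
    (Finset.mem_univ a)

/-- Kernel of the good strategy. -/
noncomputable def gK (M : MDP Q A) : Matrix Q Q ℝ := fun q q' => ∑ a, M.gs q a * M.δ q a q'

lemma gK_nonneg (M : MDP Q A) (q q' : Q) : 0 ≤ M.gK q q' :=
  Finset.sum_nonneg fun a _ => mul_nonneg (M.gs_nonneg q a) (M.δ_nonneg _ _ _)

lemma gK_sum [Nonempty A] (M : MDP Q A) (q : Q) : ∑ q', M.gK q q' = 1 := by
  unfold gK
  rw [Finset.sum_comm]
  simp_rw [← Finset.mul_sum, M.δ_sum, mul_one]
  exact M.gs_sum q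

lemma gK_pos_of_edge [Nonempty A] (M : MDP Q A) {S : Set Q} (hS : M.IsEC S) {u v : Q}
    (h : M.ECEdge S u v) : 0 < M.gK u v := by
  obtain ⟨hu, -, a, ha, hd⟩ := h
  refine sum_pos_of_exists (fun a => mul_nonneg (M.gs_nonneg u a) (M.δ_nonneg _ _ _)) a
    (mul_pos ?_ hd)
  refine div_pos ?_ (M.wt_sum_pos u)
  unfold wt
  rw [if_pos (fun _ => ⟨S, hS, hu, ha⟩)]
  exact one_pos

lemma gK_reach [Nonempty A] (M : MDP Q A) {S : Set Q} (hS : M.IsEC S) {u v : Q}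
    (h : Relation.ReflTransGen (M.ECEdge S) u v) : ∃ s, 0 < (M.gK ^ s) u v := by
  induction h with
  | refl => exact ⟨0, by simp⟩
  | @tail b c _ h2 ih =>
    obtain ⟨s, hs⟩ := ih
    exact ⟨s + 1, pow_add_pos _ M.gK_nonneg M.gK_sum hs (by simpa using M.gK_pos_of_edge hS h2)⟩

lemma gK_return [Nonempty A] (M : MDP Q A) {q : Q} (hq : q ∈ M.ECUnion) (m : ℕ) :
    ∀ x, 0 < (M.gK ^ m) q x → x ∈ M.ECUnion ∧ ∃ s, 0 < (M.gK ^ s) x q := by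
  induction m with
  | zero =>
    intro x hx
    have : q = x := by
      by_contra hne
      simp [hne] at hx
    subst this
    exact ⟨hq, 0, by simp⟩
  | succ m ih =>
    intro x hx
    rw [pow_succ, Matrix.mul_apply] at hx
    obtain ⟨y, hy⟩ := exists_pos_of_sum_pos hx
    have hn := (pow_stoch _ M.gK_nonneg M.gK_sum m).1 q y
    have h1 : 0 < (M.gK ^ m) q y := by
      refine hn.lt_of_ne fun h => ?_
      rw [← h] at hy; simp at hy
    have h2 : 0 < M.gK y x := by
      refine (M.gK_nonneg y x).lt_of_ne fun h => ?_
      rw [← h] at hy; simp at hy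
    obtain ⟨hyE, s, hs⟩ := ih y h1
    obtain ⟨a, ha⟩ := exists_pos_of_sum_pos h2
    have hd : 0 < M.δ y a x := by
      refine (M.δ_nonneg y a x).lt_of_ne fun h => ?_
      rw [← h] at ha; simp at ha
    have hg : M.Good y a := by
      by_contra hng
      have : M.gs y a = 0 := by
        unfold gs wt
        rw [if_neg (fun h => hng (h hyE)), zero_div]
      rw [this] at ha; simp at ha
    obtain ⟨S, hS, hyS, hall⟩ := hg
    have hxS := hall x hd
    obtain ⟨s', hs'⟩ := M.gK_reach hS (hS.2 x hxS y hyS)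
    exact ⟨Set.mem_sUnion.2 ⟨S, hS, hxS⟩, s' + s, pow_add_pos _ M.gK_nonneg M.gK_sum hs' hs⟩

lemma common_return [Nonempty A] (M : MDP Q A) :
    ∃ R ≥ 1, ∀ q ∈ M.ECUnion, ∃ c > (0 : ℝ), ∀ m : ℕ, c ≤ (M.gK ^ (m * R)) q q := by
  have : ∀ q, ∃ R ≥ 1, q ∈ M.ECUnion → ∃ c > (0 : ℝ), ∀ m : ℕ, c ≤ (M.gK ^ (m * R)) q q := by
    intro q
    by_cases hq : q ∈ M.ECUnion
    · obtain ⟨R, hR, h⟩ := return_bound M.gK M.gK_nonneg M.gK_sum q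
        (fun m x hx => (M.gK_return hq m x hx).2)
      exact ⟨R, hR, fun _ => h⟩
    · exact ⟨1, le_rfl, fun h => absurd h hq⟩
  choose R hR h using this
  refine ⟨∏ q, R q, Finset.one_le_prod' fun q _ => hR q, fun q hq => ?_⟩
  obtain ⟨c, hc, hm⟩ := h q hq
  refine ⟨c, hc, fun m => ?_⟩
  obtain ⟨k, hk⟩ := Finset.dvd_prod_of_mem R (Finset.mem_univ q)
  rw [hk, show m * (R q * k) = (m * k) * R q by ring]
  exact hm _

lemma backward [Nonempty A] (M : MDP Q A) {d0 : Q → ℝ} (hd0 : IsDist d0) (T : Set Q)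
    (h1 : ∀ i : ℕ, 0 < mass (M.stepDist (uniformStrategy Q A) d0 i) T) (B : ℕ)
    (h2 : ∀ i ≥ B, 0 < mass (M.stepDist (uniformStrategy Q A) d0 i) (M.ECUnion ∩ T)) :
    M.BndAlways d0 T := by
  obtain ⟨R, hR, hret⟩ := M.common_return
  set N := B + R with hN
  set κ : ℝ := 1 / (Fintype.card A : ℝ) with hκ
  have hcard : (1 : ℝ) ≤ Fintype.card A := by exact_mod_cast Fintype.card_pos (α := A)
  have κpos : 0 < κ := by positivity
  have κle : κ ≤ 1 := by rw [hκ, div_le_one (by positivity)]; exact hcard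
  set s : ℕ → Q → A → ℝ := fun i q a => if i < N then κ else M.gs q a with hs
  set τ : List (Q × A) → Q → A → ℝ := fun h => s h.length with hτ
  have τstr : IsStrategy τ := by
    refine ⟨fun h q a => ?_, fun h q => ?_⟩
    · simp only [hτ, hs]; split_ifs
      exacts [κpos.le, M.gs_nonneg _ _]
    · simp only [hτ, hs]; split_ifs
      · simp [hκ]
      · exact M.gs_sum q
  set D := M.stepDist τ d0 with hD
  have Dn : ∀ i q, 0 ≤ D i q := fun i q => stepDist_nonneg M τstr hd0 i q
  have Dsucc : ∀ i q', D (i + 1) q' = ∑ q, ∑ a, D i q * s i q a * M.δ q a q' := by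
    intro i q'
    rw [hD, stepDist_succ]
    simp only [hτ, joint_markov]
  have Deq : ∀ i ≤ N, ∀ q, D i q = M.stepDist (uniformStrategy Q A) d0 i q := by
    intro i
    induction i with
    | zero => intro _ q; rw [hD, stepDist_zero, stepDist_zero]
    | succ i ih =>
      intro hi q
      rw [Dsucc, stepDist_succ]
      refine Finset.sum_congr rfl fun y _ => Finset.sum_congr rfl fun a _ => ?_
      rw [uniform_joint, ih (by omega)]
      simp only [hs, if_pos (show i < N by omega), hκ]
  have step : ∀ i q', (if i < N then κ else 1) * ∑ q, D i q * M.gK q q' ≤ D (i + 1) q' := by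
    intro i q'
    rw [Dsucc, Finset.mul_sum]
    refine Finset.sum_le_sum fun q _ => ?_
    unfold gK
    rw [Finset.mul_sum, Finset.mul_sum]
    refine Finset.sum_le_sum fun a _ => ?_
    have e : (if i < N then κ else 1) * M.gs q a ≤ s i q a := by
      simp only [hs]
      split_ifs
      · exact mul_le_of_le_one_right κpos.le (M.gs_le_one q a)
      · rw [one_mul]
    have := mul_le_mul_of_nonneg_right (mul_le_mul_of_nonneg_left e (Dn i q)) (M.δ_nonneg q a q')
    calc _ = D i q * ((if i < N then κ else 1) * M.gs q a) * M.δ q a q' := by ring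
      _ ≤ _ := this
  have low : ∀ i0 q0 j x, κ ^ (min j N) * D i0 q0 * (M.gK ^ j) q0 x ≤ D (i0 + j) x := by
    intro i0 q0 j
    induction j with
    | zero =>
      intro x
      by_cases hx : q0 = x
      · subst hx; simp
      · simp [hx]; exact Dn _ _
    | succ j ih =>
      intro x
      have hfac : κ ^ (min (j + 1) N) ≤ (if i0 + j < N then κ else 1) * κ ^ (min j N) := by
        split_ifs with hlt
        · rw [← pow_succ', show min (j + 1) N = min j N + 1 by omega]
        · rw [one_mul]
          exact pow_le_pow_of_le_one κpos.le κle (by omega)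
      have hfn : (0 : ℝ) ≤ (if i0 + j < N then κ else 1) := by
        split_ifs
        exacts [κpos.le, zero_le_one]
      have hpn := (pow_stoch _ M.gK_nonneg M.gK_sum (j + 1)).1 q0 x
      calc κ ^ (min (j + 1) N) * D i0 q0 * (M.gK ^ (j + 1)) q0 x
          ≤ ((if i0 + j < N then κ else 1) * κ ^ (min j N)) * D i0 q0 * (M.gK ^ (j + 1)) q0 x :=
            mul_le_mul_of_nonneg_right (mul_le_mul_of_nonneg_right hfac (Dn _ _)) hpn
        _ = (if i0 + j < N then κ else 1) *
            ∑ y, (κ ^ (min j N) * D i0 q0 * (M.gK ^ j) q0 y) * M.gK y x := by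
            rw [pow_succ, Matrix.mul_apply, Finset.mul_sum, Finset.mul_sum]
            refine Finset.sum_congr rfl fun y _ => ?_
            ring
        _ ≤ (if i0 + j < N then κ else 1) * ∑ y, D (i0 + j) y * M.gK y x := by
            refine mul_le_mul_of_nonneg_left (Finset.sum_le_sum fun y _ => ?_) hfn
            exact mul_le_mul_of_nonneg_right (ih y) (M.gK_nonneg _ _)
        _ ≤ _ := step _ _
  have un := fun i => stepDist_nonneg M (uniform_isStrategy (Q := Q) (A := A)) hd0 i
  have hb : ∀ i0, ∃ b > (0 : ℝ), B ≤ i0 → i0 < N → ∀ m, b ≤ mass (D (i0 + m * R)) T := by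
    intro i0
    by_cases hi : B ≤ i0 ∧ i0 < N
    · obtain ⟨q, ⟨hqE, hqT⟩, hq⟩ := (mass_pos_iff (un i0) _).1 (h2 i0 hi.1)
      rw [← Deq i0 hi.2.le] at hq
      obtain ⟨c, hc, hcm⟩ := hret q hqE
      refine ⟨κ ^ N * D i0 q * c, by positivity, fun _ _ m => ?_⟩
      calc κ ^ N * D i0 q * c ≤ κ ^ (min (m * R) N) * D i0 q * (M.gK ^ (m * R)) q q := by
            refine mul_le_mul (mul_le_mul_of_nonneg_right ?_ hq.le) (hcm m) hc.le (by positivity)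
            exact pow_le_pow_of_le_one κpos.le κle (min_le_right _ _)
        _ ≤ D (i0 + m * R) q := low _ _ _ _
        _ ≤ _ := le_mass (Dn _) hqT
    · exact ⟨1, one_pos, fun a b => absurd ⟨a, b⟩ hi⟩
  choose b hbpos hb using hb
  obtain ⟨c, hc, hcl⟩ := exists_pos_lb (Finset.range N) b (fun i _ => hbpos i)
  obtain ⟨c', hc', hcl'⟩ := exists_pos_lb (Finset.range N)
    (fun i => mass (M.stepDist (uniformStrategy Q A) d0 i) T) (fun i _ => h1 i)
  have hmin : 0 < min c c' := lt_min hc hc'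
  refine ⟨τ, τstr, min c c' / 2, by positivity, fun i => (half_lt_self hmin).trans_le ?_⟩
  by_cases hi : i < N
  · have : mass (D i) T = mass (M.stepDist (uniformStrategy Q A) d0 i) T := by
      rw [show D i = M.stepDist (uniformStrategy Q A) d0 i from funext (Deq i hi.le)]
    change _ ≤ mass (D i) T
    rw [this]
    exact (min_le_right _ _).trans (hcl' i (Finset.mem_range.2 hi))
  · have hmod := Nat.mod_lt (i - B) (show 0 < R by omega)
    have hdiv := Nat.mod_add_div (i - B) R
    have e : B + (i - B) % R + ((i - B) / R) * R = i := by
      rw [Nat.mul_comm ((i - B) / R) R]; omega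
    have := hb (B + (i - B) % R) (by omega) (by omega) ((i - B) / R)
    rw [e] at this
    exact (min_le_left _ _).trans ((hcl _ (Finset.mem_range.2 (by omega))).trans this)

lemma forward [Nonempty A] (M : MDP Q A) {d0 : Q → ℝ} (hd0 : IsDist d0) (T : Set Q)
    (h : M.BndAlways d0 T) :
    (∀ i : ℕ, 0 < mass (M.stepDist (uniformStrategy Q A) d0 i) T) ∧
        ∀ i ≥ 2 ^ Fintype.card Q,
          0 < mass (M.stepDist (uniformStrategy Q A) d0 i) (M.ECUnion ∩ T) := by
  obtain ⟨σ, hσ, ε, hε, hT⟩ := h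
  have un := fun i => stepDist_nonneg M (uniform_isStrategy (Q := Q) (A := A)) hd0 i
  have sn := fun i => stepDist_nonneg M hσ hd0 i
  constructor
  · intro i
    obtain ⟨q, hq, hp⟩ := (mass_pos_iff (sn i) T).1 (hε.trans (hT i))
    exact (mass_pos_iff (un i) T).2 ⟨q, hq, uniform_pos_of_pos M hσ hd0 i q hp⟩
  · intro i hi
    by_contra hcon
    obtain ⟨p, hp, hper⟩ := uniform_periodic M hd0
    refine not_bounded_outside M hσ hd0 ε hε i p hp fun m => (hT (i + m * p)).le.trans ?_
    unfold mass
    refine Finset.sum_le_sum fun q _ => ?_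
    by_cases hqT : q ∈ T
    · by_cases hqE : q ∈ M.ECUnion
      · have hz : M.stepDist σ d0 (i + m * p) q ≤ 0 := by
          by_contra hpos
          push Not at hpos
          have h3 : q ∈ supp (M.stepDist (uniformStrategy Q A) d0 (i + m * p)) :=
            uniform_pos_of_pos M hσ hd0 _ q hpos
          rw [hper i hi m] at h3
          exact hcon ((mass_pos_iff (un i) _).2 ⟨q, ⟨hqE, hqT⟩, h3⟩)
        simpa [hqT, hqE] using hz
      · simp [hqT, hqE]
    · rw [Set.indicator_of_notMem hqT]
      exact Set.indicator_nonneg (fun q _ => sn _ q) q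

end MDP

open MDP in
/-- `d0` is boundedly always synchronizing in `T` iff the uniform strategy
keeps positive mass in `T` at every step and positive mass in `E ∩ T` at every
step `i ≥ 2^n`. -/
theorem stmt14 {Q A : Type} [Fintype Q] [Fintype A] [Nonempty A] (M : MDP Q A)
    (d0 : Q → ℝ) (hd0 : IsDist d0) (T : Set Q) :
    M.BndAlways d0 T ↔
      ((∀ i : ℕ, 0 < mass (M.stepDist (uniformStrategy Q A) d0 i) T) ∧
        ∀ i ≥ 2 ^ Fintype.card Q,
          0 < mass (M.stepDist (uniformStrategy Q A) d0 i) (M.ECUnion ∩ T)) :=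
  ⟨fun h => forward M hd0 T h, fun h => backward M hd0 T h.1 _ h.2⟩
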